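/- arXiv:2603.19401 — 2 statements merged into one kernel-verified Lean document; each statement's English description precedes it below -/
import Mathlib

section
/- The characteristic polynomial of A₄(2), namely x⁴ − x³ − 2x + 1, is irreducible over ℚ and the Galois group over ℚ of its splitting field is isomorphic to the symmetric group S₄ on four elements. -/
open Polynomial

/-- The matrix `A₄(k)` (over `ℚ`) with rows `(0,0,k,k−1)`, `(1,0,0,0)`, `(0,1,0,0)`,
`(0,0,1,1)`; its characteristic polynomial is `x⁴ − x³ − kx + 1`. -/
def A4 (k : ℤ) : Matrix (Fin 4) (Fin 4) ℚ :=
  !![0, 0, (k : ℚ), (k : ℚ) - 1; 1, 0, 0, 0; 0, 1, 0, 0; 0, 0, 1, 1]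

/-!
For an irreducible quartic with irreducible resolvent cubic, the splitting field has subfields of
degrees 4 and 3, so the Galois group has index at most 2 in `S₄`; index 2 would make it `A₄`. The
product of the differences of the roots is multiplied by `sign σ` under `σ`, and its square is the
discriminant, so a nonsquare discriminant rules out `A₄`. Here the resolvent cubic is `y³ − 2y − 5`,
with discriminant `−643`; the quartic is irreducible mod 2 and the resolvent cubic is irreducible
mod 7.
-/

section GaloisAction

open Matrix Equiv

theorem perm_subgroup_eq_top_of_index_dvd_two {α : Type*} [Fintype α] [DecidableEq α]
    {H : Subgroup (Perm α)} (hindex : H.index ∣ 2) {σ : Perm α} (hσ : σ ∈ H)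
    (hsign : Perm.sign σ = -1) : H = ⊤ := by
  rcases (Nat.dvd_prime Nat.prime_two).mp hindex with hone | htwo
  · exact Subgroup.index_eq_one.mp hone
  · rw [Perm.eq_alternatingGroup_of_index_eq_two htwo, Perm.mem_alternatingGroup, hsign] at hσ
    exact absurd hσ (by decide)

theorem det_vandermonde_comp_perm {R : Type*} [CommRing R] {n : ℕ} (v : Fin n → R)
    (π : Perm (Fin n)) :
    (vandermonde (v ∘ π)).det = Perm.sign π * (vandermonde v).det :=
  det_permute π (vandermonde v)

variable {F E : Type*} [Field F] [Field E] [Algebra F E] {p : F[X]}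
  [Fact ((p.map (algebraMap F E)).Splits)] [DecidableEq (p.rootSet E)]

theorem galActionHom_bijective_of_sign_eq_neg_one
    (hcard : (Nat.card (p.rootSet E)).factorial ∣ Nat.card p.Gal * 2) {σ : p.Gal}
    (hσ : Perm.sign (Gal.galActionHom p E σ) = -1) :
    Function.Bijective (Gal.galActionHom p E) := by
  have hinj := Gal.galActionHom_injective p E
  have hrange : Nat.card p.Gal = Nat.card (Gal.galActionHom p E).range :=
    Nat.card_congr (MonoidHom.ofInjective hinj).toEquiv
  have hindex : (Gal.galActionHom p E).range.index ∣ 2 := by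
    rw [← Nat.card_perm, ← (Gal.galActionHom p E).range.card_mul_index, hrange] at hcard
    exact Nat.dvd_of_mul_dvd_mul_left Nat.card_pos hcard
  exact ⟨hinj, MonoidHom.range_eq_top.mp
    (perm_subgroup_eq_top_of_index_dvd_two hindex ⟨σ, rfl⟩ hσ)⟩

theorem map_det_vandermonde_rootSet {n : ℕ}
    (e : Fin n ≃ p.rootSet E) (φ : Gal(E/F)) :
    φ (vandermonde fun i ↦ (e i : E)).det =
      Perm.sign (Gal.galActionHom p E (Gal.restrict p E φ)) *
        (vandermonde fun i ↦ (e i : E)).det := by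
  set σ := Gal.galActionHom p E (Gal.restrict p E φ)
  have hσ : (fun i ↦ φ (e i)) = (fun i ↦ (e i : E)) ∘ e.symm.permCongr σ := by
    ext i
    simp [σ, Gal.galActionHom_restrict]
  have hmap : φ.toRingEquiv.toRingHom.mapMatrix (vandermonde fun i ↦ (e i : E)) =
      vandermonde fun i ↦ φ (e i) := by
    ext i j
    simp [vandermonde_apply]
  calc φ (vandermonde fun i ↦ (e i : E)).det = (vandermonde fun i ↦ φ (e i)).det := by
        rw [← hmap, ← RingHom.map_det]; rfl
    _ = Perm.sign σ * (vandermonde fun i ↦ (e i : E)).det := by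
        rw [hσ, det_vandermonde_comp_perm, Perm.sign_permCongr]

theorem exists_sign_galActionHom_eq_neg_one [IsGalois F E] {n : ℕ}
    (e : Fin n ≃ p.rootSet E) {D : F}
    (hD : algebraMap F E D = (vandermonde fun i ↦ (e i : E)).det ^ 2) (hsq : ¬ IsSquare D) :
    ∃ σ : p.Gal, Perm.sign (Gal.galActionHom p E σ) = -1 := by
  by_contra! heven
  have hfixed (φ : Gal(E/F)) :
      φ (vandermonde fun i ↦ (e i : E)).det = (vandermonde fun i ↦ (e i : E)).det := by
    rw [map_det_vandermonde_rootSet e φ,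
      (Int.units_eq_one_or _).resolve_right (heven (Gal.restrict p E φ))]
    simp
  obtain ⟨δ, hδ⟩ := (InfiniteGalois.mem_range_algebraMap_iff_fixed _).mpr hfixed
  refine hsq ⟨δ, (algebraMap F E).injective ?_⟩
  rw [hD, ← hδ, map_mul, sq]

end GaloisAction

section RootEnumeration

theorem isMonicOfDegree_map {R S : Type*} [Semiring R] [Semiring S] [Nontrivial S] (f : R →+* S)
    {p : R[X]} {n : ℕ} (hp : IsMonicOfDegree p n) : IsMonicOfDegree (p.map f) n :=
  ⟨(hp.monic.natDegree_map f).trans hp.natDegree_eq, hp.monic.map f⟩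

theorem exists_eq_prod_X_sub_C_of_splits {K : Type*} [Field K] {p : K[X]} {n : ℕ}
    (hp : IsMonicOfDegree p n) (hs : p.Splits) : ∃ v : Fin n → K, p = ∏ i, (X - C (v i)) := by
  obtain ⟨l, hl⟩ := Quot.exists_rep p.roots
  replace hl : (l : Multiset K) = p.roots := hl
  obtain rfl : l.length = n := by
    rw [← hp.natDegree_eq, hs.natDegree_eq_card_roots, ← hl, Multiset.coe_card]
  refine ⟨l.get, ?_⟩
  rw [hs.eq_prod_roots_of_monic hp.monic, ← hl, Multiset.map_coe, Multiset.prod_coe]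
  exact (Fin.prod_univ_fun_getElem l fun x ↦ X - C x).symm

theorem exists_equiv_rootSet_of_map_eq_prod {F E : Type*} [Field F] [Field E] [Algebra F E]
    {p : F[X]} {n : ℕ} {v : Fin n → E} (hv : Function.Injective v)
    (hp : p.map (algebraMap F E) = ∏ i, (X - C (v i))) :
    ∃ e : Fin n ≃ p.rootSet E, ∀ i, (e i : E) = v i := by
  have hrootSet : p.rootSet E = Set.range v := by
    ext x
    rw [rootSet, aroots, hp,
      roots_prod _ _ (Finset.prod_ne_zero_iff.mpr fun i _ ↦ X_sub_C_ne_zero (v i))]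
    simp [eq_comm]
  exact ⟨(Equiv.ofInjective v hv).trans (Equiv.setCongr hrootSet.symm), fun _ ↦ rfl⟩

end RootEnumeration

section ResolventCubic

theorem coeff_monic_quartic {R : Type*} [Semiring R] (a b c d : R) :
    let p := X ^ 4 + C a * X ^ 3 + C b * X ^ 2 + C c * X + C d
    p.coeff 3 = a ∧ p.coeff 2 = b ∧ p.coeff 1 = c ∧ p.coeff 0 = d := by
  simp [coeff_X, coeff_C, coeff_X_pow]

/-- The resolvent cubic of a monic quartic `x⁴ + ax³ + bx² + cx + d` with roots `x₀, …, x₃`, whose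
roots are `x₀x₁ + x₂x₃`, `x₀x₂ + x₁x₃` and `x₀x₃ + x₁x₂`. -/
def resolventCubic {R : Type*} [CommRing R] (p : R[X]) : Cubic R where
  a := 1
  b := -p.coeff 2
  c := p.coeff 3 * p.coeff 1 - 4 * p.coeff 0
  d := 4 * p.coeff 2 * p.coeff 0 - p.coeff 3 ^ 2 * p.coeff 0 - p.coeff 1 ^ 2

theorem resolventCubic_map {R S : Type*} [CommRing R] [CommRing S] (f : R →+* S) (p : R[X]) :
    resolventCubic (p.map f) = (resolventCubic p).map f := by
  simp [resolventCubic, Cubic.map, map_ofNat f]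

section Roots

variable {R : Type*} [CommRing R] (v : Fin 4 → R)

theorem prod_X_sub_C_fin_four :
    ∏ i, (X - C (v i)) =
      X ^ 4 + C (-(v 0 + v 1 + v 2 + v 3)) * X ^ 3 +
        C (v 0 * v 1 + v 0 * v 2 + v 0 * v 3 + v 1 * v 2 + v 1 * v 3 + v 2 * v 3) * X ^ 2 +
        C (-(v 0 * v 1 * v 2 + v 0 * v 1 * v 3 + v 0 * v 2 * v 3 + v 1 * v 2 * v 3)) * X +
        C (v 0 * v 1 * v 2 * v 3) := by
  simp only [Fin.prod_univ_four, C_neg, C_add, C_mul]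
  ring

theorem resolventCubic_prod_X_sub_C :
    resolventCubic (∏ i, (X - C (v i))) =
      let x := v 0 * v 1 + v 2 * v 3
      let y := v 0 * v 2 + v 1 * v 3
      let z := v 0 * v 3 + v 1 * v 2
      ⟨1, -(x + y + z), x * y + x * z + y * z, -(x * y * z)⟩ := by
  rw [prod_X_sub_C_fin_four]
  obtain ⟨h₃, h₂, h₁, h₀⟩ := coeff_monic_quartic (-(v 0 + v 1 + v 2 + v 3))
    (v 0 * v 1 + v 0 * v 2 + v 0 * v 3 + v 1 * v 2 + v 1 * v 3 + v 2 * v 3)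
    (-(v 0 * v 1 * v 2 + v 0 * v 1 * v 3 + v 0 * v 2 * v 3 + v 1 * v 2 * v 3))
    (v 0 * v 1 * v 2 * v 3)
  ext <;> simp only [resolventCubic, h₃, h₂, h₁, h₀] <;> ring

theorem discr_resolventCubic_prod_X_sub_C :
    (resolventCubic (∏ i, (X - C (v i)))).discr = (Matrix.vandermonde v).det ^ 2 := by
  have hdet : (Matrix.vandermonde v).det =
      (v 1 - v 0) * (v 2 - v 0) * (v 3 - v 0) * (v 2 - v 1) * (v 3 - v 1) * (v 3 - v 2) := by
    simp [Matrix.det_vandermonde, Fin.prod_univ_succ, Fin.prod_Ioi_succ, mul_assoc]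
  rw [resolventCubic_prod_X_sub_C, hdet, Cubic.discr]
  ring

end Roots

theorem splits_resolventCubic {K : Type*} [Field K] {p : K[X]} (hp : IsMonicOfDegree p 4)
    (hs : p.Splits) : (resolventCubic p).toPoly.Splits := by
  obtain ⟨v, rfl⟩ := exists_eq_prod_X_sub_C_of_splits hp hs
  rw [resolventCubic_prod_X_sub_C, ← Cubic.prod_X_sub_C_eq]
  exact ((Splits.X_sub_C _).mul (Splits.X_sub_C _)).mul (Splits.X_sub_C _)

variable {F : Type*} [Field F] {p : F[X]}

theorem twelve_dvd_finrank_of_irreducible_resolventCubic {E : Type*} [Field E] [Algebra F E]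
    (hp : IsMonicOfDegree p 4) (hs : (p.map (algebraMap F E)).Splits) (hirr : Irreducible p)
    (hres : Irreducible (resolventCubic p).toPoly) : 12 ∣ Module.finrank F E := by
  have hfour : 4 ∣ Module.finrank F E := hp.natDegree_eq ▸ hirr.natDegree_dvd_finrank hs
  have hthree : 3 ∣ Module.finrank F E := by
    rw [← Cubic.natDegree_of_a_ne_zero (P := resolventCubic p) one_ne_zero]
    apply hres.natDegree_dvd_finrank
    rw [← Cubic.map_toPoly, ← resolventCubic_map]
    exact splits_resolventCubic (isMonicOfDegree_map _ hp) hs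
  exact Nat.Coprime.mul_dvd_of_dvd_of_dvd (by norm_num : Nat.Coprime 4 3) hfour hthree

theorem nonempty_gal_mulEquiv_perm_of_irreducible_resolventCubic (hp : IsMonicOfDegree p 4)
    (hirr : Irreducible p) (hres : Irreducible (resolventCubic p).toPoly)
    (hdiscr : ¬ IsSquare (resolventCubic p).discr) :
    Nonempty (p.Gal ≃* Equiv.Perm (Fin 4)) := by
  classical
  let E := p.SplittingField
  have hs : (p.map (algebraMap F E)).Splits := SplittingField.splits p
  obtain ⟨v, hv⟩ := exists_eq_prod_X_sub_C_of_splits (isMonicOfDegree_map _ hp) hs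
  have hdet : algebraMap F E (resolventCubic p).discr = (Matrix.vandermonde v).det ^ 2 := by
    rw [← discr_resolventCubic_prod_X_sub_C, ← hv, resolventCubic_map]
    simp [Cubic.discr, Cubic.map, map_ofNat (algebraMap F E)]
  have hinj : Function.Injective v := by
    rw [← Matrix.det_vandermonde_ne_zero_iff, ← pow_ne_zero_iff two_ne_zero, ← hdet,
      _root_.map_ne_zero]
    exact fun hzero ↦ hdiscr (hzero ▸ IsSquare.zero)
  have hsep : p.Separable := by
    rw [← separable_map (algebraMap F E), hv]
    exact separable_prod_X_sub_C_iff.mpr hinj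
  obtain ⟨e, he⟩ := exists_equiv_rootSet_of_map_eq_prod hinj hv
  have : Fact (p.map (algebraMap F E)).Splits := ⟨hs⟩
  have : IsGalois F E := IsGalois.of_separable_splitting_field hsep
  obtain ⟨σ, hσ⟩ := exists_sign_galActionHom_eq_neg_one e (by simpa only [he] using hdet) hdiscr
  have hcard : (Nat.card (p.rootSet E)).factorial ∣ Nat.card p.Gal * 2 := by
    rw [← Nat.card_congr e, Nat.card_fin, Gal.card_of_separable hsep]
    exact Nat.mul_dvd_mul_right
      (twelve_dvd_finrank_of_irreducible_resolventCubic hp hs hirr hres) 2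
  exact ⟨(MulEquiv.ofBijective _ (galActionHom_bijective_of_sign_eq_neg_one hcard hσ)).trans
    e.symm.permCongrHom⟩

end ResolventCubic

section Irreducibility

theorem irreducible_of_isMonicOfDegree_four {R : Type*} [CommRing R] [IsDomain R] {p : R[X]}
    (hp : IsMonicOfDegree p 4) (hroot : ∀ x, ¬ p.IsRoot x)
    (hquad : ∀ a b c d : R, ¬ (a + c = p.coeff 3 ∧ b + a * c + d = p.coeff 2 ∧
      a * d + b * c = p.coeff 1 ∧ b * d = p.coeff 0)) :
    Irreducible p := by
  have hne : p ≠ 1 := by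
    rintro rfl
    simpa using hp.natDegree_eq
  refine (hp.monic.irreducible_iff_lt_natDegree_lt hne).mpr fun q hq hdeg hqp ↦ ?_
  rw [hp.natDegree_eq, Finset.mem_Ioc] at hdeg
  obtain hq1 | hq2 : q.natDegree = 1 ∨ q.natDegree = 2 := by omega
  · obtain ⟨r, rfl⟩ := isMonicOfDegree_one_iff.mp ⟨hq1, hq⟩
    refine hroot (-r) (dvd_iff_isRoot.mp ?_)
    rwa [C_neg, sub_neg_eq_add]
  · obtain ⟨s, rfl⟩ := hqp
    obtain ⟨a, b, rfl⟩ := isMonicOfDegree_two_iff.mp ⟨hq2, hq⟩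
    obtain ⟨c, d, rfl⟩ := isMonicOfDegree_two_iff.mp
      (IsMonicOfDegree.of_mul_left (n := 2) ⟨hq2, hq⟩ hp)
    have hexpand : (X ^ 2 + C a * X + C b) * (X ^ 2 + C c * X + C d) =
        X ^ 4 + C (a + c) * X ^ 3 + C (b + a * c + d) * X ^ 2 + C (a * d + b * c) * X +
          C (b * d) := by
      simp only [C_add, C_mul]
      ring
    apply hquad a b c d
    rw [hexpand]
    obtain ⟨h₃, h₂, h₁, h₀⟩ := coeff_monic_quartic (a + c) (b + a * c + d) (a * d + b * c) (b * d)
    exact ⟨h₃.symm, h₂.symm, h₁.symm, h₀.symm⟩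

theorem irreducible_map_rat_of_irreducible_map_zmod (ℓ : ℕ) [Fact ℓ.Prime] {p : ℤ[X]}
    (hp : p.Monic) (h : Irreducible (p.map (Int.castRingHom (ZMod ℓ)))) :
    Irreducible (p.map (Int.castRingHom ℚ)) :=
  (hp.irreducible_iff_irreducible_map_fraction_map (K := ℚ)).mp
    (hp.irreducible_of_irreducible_map _ p h)

theorem isMonicOfDegree_X_pow_four_sub_X_pow_three_sub_C_mul_X_add_one {R : Type*} [CommRing R]
    [Nontrivial R] (k : R) : IsMonicOfDegree (X ^ 4 - X ^ 3 - C k * X + 1) 4 :=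
  ⟨by compute_degree!, by monicity!⟩

theorem irreducible_X_pow_four_sub_X_pow_three_sub_two_mul_X_add_one :
    Irreducible (X ^ 4 - X ^ 3 - C (2 : ℚ) * X + 1) := by
  have hroot : ∀ x : ZMod 2, x ^ 4 - x ^ 3 - 2 * x + 1 ≠ 0 := by decide
  have hquad : ∀ a b c d : ZMod 2, ¬ (a + c = -1 ∧ b + a * c + d = 0 ∧
      a * d + b * c = -2 ∧ b * d = 1) := by decide
  have hmonic :=
    isMonicOfDegree_X_pow_four_sub_X_pow_three_sub_C_mul_X_add_one (2 : ℤ)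
  have hmod : Irreducible
      ((X ^ 4 - X ^ 3 - C 2 * X + 1 : ℤ[X]).map (Int.castRingHom (ZMod 2))) := by
    apply irreducible_of_isMonicOfDegree_four
    · exact isMonicOfDegree_map _ hmonic
    · simpa using hroot
    · simpa [coeff_X, coeff_X_pow, coeff_one, coeff_ofNat_mul] using hquad
  simpa only [Polynomial.map_add, Polynomial.map_sub, Polynomial.map_mul, Polynomial.map_pow,
    Polynomial.map_one, map_X, map_C, Int.coe_castRingHom, Int.cast_ofNat] using
    irreducible_map_rat_of_irreducible_map_zmod 2 hmonic.monic hmod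

theorem irreducible_X_pow_three_sub_two_mul_X_sub_five :
    Irreducible (⟨1, 0, -2, -5⟩ : Cubic ℚ).toPoly := by
  have hroot : ∀ x : ZMod 7, x ^ 3 - 2 * x - 5 ≠ 0 := by decide
  have : Fact (Nat.Prime 7) := ⟨by norm_num⟩
  have hmod : Irreducible
      ((⟨1, 0, -2, -5⟩ : Cubic ℤ).toPoly.map (Int.castRingHom (ZMod 7))) := by
    apply irreducible_of_degree_le_three_of_not_isRoot
    · rw [Cubic.monic_of_a_eq_one'.natDegree_map, Cubic.natDegree_of_a_ne_zero' one_ne_zero]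
      decide
    · simpa [Cubic.toPoly, ← sub_eq_add_neg] using hroot
  simpa [← Cubic.map_toPoly, Cubic.map] using
    irreducible_map_rat_of_irreducible_map_zmod 7 Cubic.monic_of_a_eq_one' hmod

end Irreducibility

theorem A4_charpoly (k : ℤ) : (A4 k).charpoly = X ^ 4 - X ^ 3 - C (k : ℚ) * X + 1 := by
  have hcharmatrix : (A4 k).charmatrix =
      !![X, 0, -C (k : ℚ), 1 - C (k : ℚ); -1, X, 0, 0; 0, -1, X, 0; 0, 0, -1, X - 1] := by
    ext i j : 1
    fin_cases i <;> fin_cases j <;> simp [A4]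
  calc (A4 k).charpoly = X * (X * X * (X - 1)) + -(C (k : ℚ) * (X - 1)) + (1 - C (k : ℚ)) := by
        rw [Matrix.charpoly, hcharmatrix, Matrix.det_succ_row_zero]
        simp [Matrix.det_fin_three, Fin.sum_univ_four, Fin.succAbove, pow_succ]
    _ = X ^ 4 - X ^ 3 - C (k : ℚ) * X + 1 := by ring

/-- The characteristic polynomial of `A₄(2)`, namely `x⁴ − x³ − 2x + 1`, is irreducible over
`ℚ` and the Galois group over `ℚ` of its splitting field is isomorphic to `S₄`. -/
theorem A4_two_Galois_group :
    (A4 2).charpoly = X ^ 4 - X ^ 3 - C (2 : ℚ) * X + 1 ∧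
    Irreducible (X ^ 4 - X ^ 3 - C (2 : ℚ) * X + 1) ∧
    Nonempty ((X ^ 4 - X ^ 3 - C (2 : ℚ) * X + 1).Gal ≃* Equiv.Perm (Fin 4)) := by
  have hdeg := isMonicOfDegree_X_pow_four_sub_X_pow_three_sub_C_mul_X_add_one (2 : ℚ)
  have hresolvent : resolventCubic (X ^ 4 - X ^ 3 - C (2 : ℚ) * X + 1) = ⟨1, 0, -2, -5⟩ := by
    ext <;> norm_num [resolventCubic, coeff_X, coeff_X_pow, coeff_one]
  have hdiscr : ¬ IsSquare (⟨1, 0, -2, -5⟩ : Cubic ℚ).discr := fun hsquare ↦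
    absurd hsquare.nonneg (by norm_num [Cubic.discr])
  have hirr := irreducible_X_pow_four_sub_X_pow_three_sub_two_mul_X_add_one
  refine ⟨A4_charpoly 2, hirr,
    nonempty_gal_mulEquiv_perm_of_irreducible_resolventCubic hdeg hirr ?_ ?_⟩
  · exact hresolvent ▸ irreducible_X_pow_three_sub_two_mul_X_sub_five
  · exact hresolvent ▸ hdiscr
end

section
/- For every integer d ≥ 3, the subgroup of GL(d, ℤ) generated by the set {A_d(k) : k ∈ ℕ, k ≥ 1} contains SL(d, ℤ); that is, every d×d integer matrix of determinant 1 can be written as a finite product of the matrices A_d(k) and their inverses. -/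
/-- The matrix `A_d(k)` (over `ℤ`, indices `0, …, d−1`): `A_d(k)_{0,d−2} = k`,
`A_d(k)_{0,d−1} = k−1`, subdiagonal entries `A_d(k)_{i,i−1} = 1` for `1 ≤ i ≤ d−1`,
`A_d(k)_{d−1,d−1} = 1`, and all other entries `0`. -/
def Ad (d : ℕ) (k : ℤ) : Matrix (Fin d) (Fin d) ℤ :=
  Matrix.of fun i j =>
    if i.val = 0 then (if j.val = d - 2 then k else if j.val = d - 1 then k - 1 else 0)
    else (if i.val = j.val + 1 then 1 else 0) +
      (if i.val = d - 1 ∧ j.val = d - 1 then 1 else 0)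

/-! Changing `k` only alters the first row of `Ad d k`, by a multiple of the last one, so the
quotient `Ad d (k + 1) * (Ad d k)⁻¹` is the transvection at position `(0, d - 1)`. Its powers are
all the transvections at that position, and multiplying `Ad d k` by one of them gives `Ad d 0`.
As `Ad d 0` sends `e_i` to `e_{i+1}` for `i < d - 1`, conjugation by it moves these transvections to
position `(1, 0)`, then to `(2, 1)`, and so on. Commutators of the transvections at the cyclically
adjacent positions `(i + 1, i)` give those at all other positions, and by Euclid's algorithm on the
columns of a matrix transvections generate `SL_d` over a Euclidean domain.
-/

open Matrix hiding transvection
open Matrix.SpecialLinearGroup (transvection)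

section ElementarySubgroup
variable {n R : Type*} [Fintype n] [DecidableEq n]

section CommRing
variable [CommRing R]

variable (n R) in
/-- The elementary subgroup `E_n(R)` of `SL_n(R)`, generated by the transvections. -/
def elementarySubgroup : Subgroup (SpecialLinearGroup n R) :=
  Subgroup.closure (Set.range TransvectionStruct.toSpecialLinearGroup)

lemma transvection_mem_elementarySubgroup {i j : n} (hij : i ≠ j) (c : R) :
    transvection hij c ∈ elementarySubgroup n R :=
  Subgroup.subset_closure ⟨⟨i, j, hij, c⟩, rfl⟩

lemma elementarySubgroup_le_iff {H : Subgroup (SpecialLinearGroup n R)} :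
    elementarySubgroup n R ≤ H ↔ ∀ (i j : n) (hij : i ≠ j) (c : R), transvection hij c ∈ H := by
  rw [elementarySubgroup, Subgroup.closure_le, Set.range_subset_iff]
  exact ⟨fun h i j hij c ↦ h ⟨i, j, hij, c⟩, fun h t ↦ h t.i t.j t.hij t.c⟩

lemma transvection_mul_mem_elementarySubgroup_iff {i j : n} (hij : i ≠ j) (c : R)
    {M : SpecialLinearGroup n R} :
    transvection hij c * M ∈ elementarySubgroup n R ↔ M ∈ elementarySubgroup n R :=
  Subgroup.mul_mem_cancel_left _ (transvection_mem_elementarySubgroup hij c)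

lemma transvection_mul_apply_fst {i j : n} (hij : i ≠ j) (c : R) (M : SpecialLinearGroup n R)
    (k : n) : (transvection hij c * M) i k = M i k + c * M j k :=
  transvection_mul_apply_same i j k c M.1

lemma transvection_mul_apply_of_ne_fst {i j l : n} (hij : i ≠ j) (hl : l ≠ i) (c : R)
    (M : SpecialLinearGroup n R) (k : n) : (transvection hij c * M) l k = M l k :=
  transvection_mul_apply_of_ne i j l k hl c M.1

/-- The subgroup of `SL_n(R)` of matrices whose `j`-th column is the standard basis vector `e_j`
for every `j ∉ S`. -/
def fixBasisOff (S : Finset n) : Subgroup (SpecialLinearGroup n R) :=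
  fixingSubgroup _ ((fun j ↦ (Pi.single j 1 : n → R)) '' (S : Set n)ᶜ)

lemma mem_fixBasisOff_iff {S : Finset n} {M : SpecialLinearGroup n R} :
    M ∈ fixBasisOff S ↔ ∀ j ∉ S, ∀ i, M i j = (1 : Matrix n n R) i j := by
  have hcol (j : n) : M • (Pi.single j 1 : n → R) = M.1.col j := mulVec_single_one M.1 j
  simp only [fixBasisOff, mem_fixingSubgroup_iff, Set.forall_mem_image, Set.mem_compl_iff,
    Finset.mem_coe, hcol, funext_iff, col_apply, one_apply, Pi.single_apply]

lemma fixBasisOff_univ :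
    fixBasisOff (Finset.univ : Finset n) = (⊤ : Subgroup (SpecialLinearGroup n R)) := by
  simp [eq_top_iff, SetLike.le_def, mem_fixBasisOff_iff]

lemma fixBasisOff_empty :
    fixBasisOff (∅ : Finset n) = (⊥ : Subgroup (SpecialLinearGroup n R)) := by
  refine (Subgroup.eq_bot_iff_forall _).2 fun M hM ↦ ?_
  ext i j
  exact mem_fixBasisOff_iff.1 hM j (Finset.notMem_empty j) i

lemma transvection_mem_fixBasisOff {S : Finset n} {i j : n} (hij : i ≠ j) (hj : j ∈ S) (c : R) :
    transvection hij c ∈ fixBasisOff S := by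
  refine mem_fixBasisOff_iff.2 fun l hl a ↦ ?_
  have hjl : j ≠ l := by rintro rfl; exact hl hj
  simp [SpecialLinearGroup.transvection_coe, hjl]

lemma apply_self_eq_one_of_mem_fixBasisOff_singleton {k : n} {M : SpecialLinearGroup n R}
    (hM : M ∈ fixBasisOff {k}) : M k k = 1 := by
  have hupdate : M.1 = (1 : Matrix n n R).updateCol k fun i ↦ M i k := by
    ext i j
    rcases eq_or_ne j k with rfl | hjk
    · simp
    · rw [updateCol_ne hjk, mem_fixBasisOff_iff.1 hM j (by simpa using hjk)]
  have hdet := M.det_coe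
  rwa [hupdate, ← cramer_apply, cramer_one] at hdet

lemma isUnit_of_forall_dvd_apply {S : Finset n} {k : n} (hk : k ∈ S)
    {M : SpecialLinearGroup n R} (hM : M ∈ fixBasisOff S) {a : R} (ha : ∀ i ∈ S, a ∣ M i k) :
    IsUnit a := by
  -- Row `k` of `M⁻¹` gives Bézout coefficients for column `k` of `M`.
  have hsum : ∑ i, M⁻¹ k i * M i k = 1 := by
    have hinv : (M⁻¹).1 * M.1 = 1 := congrArg Subtype.val (inv_mul_cancel M)
    simpa only [mul_apply, one_apply_eq] using congrFun (congrFun hinv k) k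
  refine isUnit_of_dvd_one (hsum ▸ Finset.dvd_sum fun i _ ↦ ?_)
  by_cases hi : i ∈ S
  · exact (ha i hi).mul_left _
  · have hki : k ≠ i := by rintro rfl; exact hi hk
    simp [mem_fixBasisOff_iff.1 (inv_mem hM) i hi k, hki, -SpecialLinearGroup.coe_inv]

variable {S : Finset n} {k : n} {M : SpecialLinearGroup n R}

lemma mem_elementarySubgroup_of_apply_self_eq_one (hS : fixBasisOff S ≤ elementarySubgroup n R)
    (hM : M ∈ fixBasisOff (insert k S)) (hMk : M k k = 1) : M ∈ elementarySubgroup n R := by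
  suffices h : ∀ t : Finset n, (∀ i ∉ t, M i k = (1 : Matrix n n R) i k) →
      M ∈ elementarySubgroup n R from h Finset.univ (by simp)
  intro t ht
  induction t using Finset.induction generalizing M with
  | empty =>
    refine hS (mem_fixBasisOff_iff.2 fun j hj i ↦ ?_)
    rcases eq_or_ne j k with rfl | hjk
    · exact ht i (Finset.notMem_empty i)
    · exact mem_fixBasisOff_iff.1 hM j (by simp [hjk, hj]) i
  | insert a t _ ih =>
    rcases eq_or_ne a k with rfl | hak
    · refine ih hM hMk fun i hi ↦ ?_
      rcases eq_or_ne i a with rfl | hia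
      · rw [hMk, one_apply_eq]
      · exact ht i (by simp [hia, hi])
    rw [← transvection_mul_mem_elementarySubgroup_iff hak (-M a k)]
    refine ih (mul_mem (transvection_mem_fixBasisOff hak (by simp) _) hM) ?_ fun i hi ↦ ?_
    · rwa [transvection_mul_apply_of_ne_fst hak hak.symm]
    · rcases eq_or_ne i a with rfl | hia
      · rw [transvection_mul_apply_fst, hMk, one_apply_ne hak]; ring
      · rw [transvection_mul_apply_of_ne_fst hak hia]
        exact ht i (by simp [hia, hi])

lemma mem_elementarySubgroup_of_isUnit_apply_ne (hS : fixBasisOff S ≤ elementarySubgroup n R)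
    (hM : M ∈ fixBasisOff (insert k S)) {p : n} (hp : p ∈ insert k S) (hkp : k ≠ p)
    (hu : IsUnit (M p k)) : M ∈ elementarySubgroup n R := by
  obtain ⟨b, hb⟩ := hu.exists_left_inv
  rw [← transvection_mul_mem_elementarySubgroup_iff hkp ((1 - M k k) * b)]
  refine mem_elementarySubgroup_of_apply_self_eq_one hS
    (mul_mem (transvection_mem_fixBasisOff hkp hp _) hM) ?_
  rw [transvection_mul_apply_fst, mul_assoc, hb]
  ring

lemma mem_elementarySubgroup_of_isUnit_apply (hS : fixBasisOff S ≤ elementarySubgroup n R)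
    (hM : M ∈ fixBasisOff (insert k S)) {p : n} (hp : p ∈ insert k S)
    (hu : IsUnit (M p k)) : M ∈ elementarySubgroup n R := by
  rcases ne_or_eq k p with hkp | rfl
  · exact mem_elementarySubgroup_of_isUnit_apply_ne hS hM hp hkp hu
  by_cases hS' : ∃ q ∈ S, q ≠ k
  · obtain ⟨q, hq, hqk⟩ := hS'
    obtain ⟨b, hb⟩ := hu.exists_left_inv
    rw [← transvection_mul_mem_elementarySubgroup_iff hqk ((1 - M q k) * b)]
    refine mem_elementarySubgroup_of_isUnit_apply_ne hS
      (mul_mem (transvection_mem_fixBasisOff hqk hp _) hM) (Finset.mem_insert_of_mem hq)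
      hqk.symm ?_
    rw [transvection_mul_apply_fst, mul_assoc, hb]
    simp
  · have hsingle : insert k S = {k} := by
      push Not at hS'
      ext i
      simpa using hS' i
    exact mem_elementarySubgroup_of_apply_self_eq_one hS hM
      (apply_self_eq_one_of_mem_fixBasisOff_singleton (hsingle ▸ hM))

open scoped commutatorElement in
lemma commutatorElement_transvection {i j k : n} (hij : i ≠ j) (hjk : j ≠ k) (hik : i ≠ k)
    (a b : R) : ⁅transvection hij a, transvection hjk b⁆ = transvection hik (a * b) := by
  rw [commutatorElement_def, mul_inv_eq_iff_eq_mul, mul_inv_eq_iff_eq_mul]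
  refine Subtype.ext ?_
  change Matrix.transvection i j a * Matrix.transvection j k b =
    Matrix.transvection i k (a * b) * Matrix.transvection j k b * Matrix.transvection i j a
  simp only [Matrix.transvection, mul_add, add_mul, mul_one, one_mul, add_zero,
    single_mul_single_same, single_mul_single_of_ne, ne_eq, hjk.symm, hik.symm, not_false_eq_true]
  abel

lemma transvection_mem_of_forall_mem {H : Subgroup (SpecialLinearGroup n R)} {i j k : n}
    (hij : ∀ (h : i ≠ j) (c : R), transvection h c ∈ H)
    (hjk : ∀ (h : j ≠ k) (c : R), transvection h c ∈ H) (hik : i ≠ k) (c : R) :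
    transvection hik c ∈ H := by
  rcases eq_or_ne i j with rfl | hij'
  · exact hjk hik c
  rcases eq_or_ne j k with rfl | hjk'
  · exact hij hik c
  rw [← mul_one c, ← commutatorElement_transvection hij' hjk' hik, commutatorElement_def]
  exact mul_mem (mul_mem (mul_mem (hij _ _) (hjk _ _)) (inv_mem (hij _ _))) (inv_mem (hjk _ _))

open scoped Fin.CommRing in
lemma elementarySubgroup_le_of_forall_add_one {m : ℕ}
    {H : Subgroup (SpecialLinearGroup (Fin (m + 1)) R)}
    (hH : ∀ (i : Fin (m + 1)) (h : i + 1 ≠ i) (c : R), transvection h c ∈ H) :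
    elementarySubgroup (Fin (m + 1)) R ≤ H := by
  have hadd (i : Fin (m + 1)) (t : ℕ) : ∀ (h : i + t ≠ i) (c : R), transvection h c ∈ H := by
    induction t with
    | zero => exact fun h ↦ absurd (by simp) h
    | succ t ih =>
      rw [Nat.cast_succ, ← add_assoc]
      exact transvection_mem_of_forall_mem (hH (i + t)) ih
  refine elementarySubgroup_le_iff.2 fun i j ↦ ?_
  have hi : j + ((i - j : Fin (m + 1)).val : Fin (m + 1)) = i := by simp
  simpa only [hi] using hadd j (i - j).val

lemma transvection_zpow {i j : n} (hij : i ≠ j) (c : R) (m : ℤ) :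
    transvection hij c ^ m = transvection hij (m • c) :=
  (map_zpow (MonoidHom.mk' (fun x : Multiplicative R ↦ transvection hij x.toAdd) fun x y ↦
    SpecialLinearGroup.transvection_add hij x.toAdd y.toAdd) (Multiplicative.ofAdd c) m).symm

end CommRing

section EuclideanDomain
variable [EuclideanDomain R]

lemma mem_elementarySubgroup_of_mem_fixBasisOff_insert {S : Finset n} {k p : n}
    {M : SpecialLinearGroup n R} (hS : fixBasisOff S ≤ elementarySubgroup n R)
    (hM : M ∈ fixBasisOff (insert k S)) (hp : p ∈ insert k S) (hpk : M p k ≠ 0) :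
    M ∈ elementarySubgroup n R := by
  induction h : M p k using IsWellFounded.induction (EuclideanDomain.r : R → R → Prop)
    generalizing M p with
  | ind a ih
  subst h
  by_cases hdvd : ∀ i ∈ insert k S, M p k ∣ M i k
  · exact mem_elementarySubgroup_of_isUnit_apply hS hM hp
      (isUnit_of_forall_dvd_apply (Finset.mem_insert_self k S) hM hdvd)
  push Not at hdvd
  obtain ⟨i, hi, hndvd⟩ := hdvd
  have hip : i ≠ p := by rintro rfl; exact hndvd dvd_rfl
  have hmod : (transvection hip (-(M i k / M p k)) * M) i k = M i k % M p k := by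
    rw [transvection_mul_apply_fst, EuclideanDomain.mod_eq_sub_mul_div]; ring
  rw [← transvection_mul_mem_elementarySubgroup_iff hip (-(M i k / M p k))]
  refine ih _ (EuclideanDomain.mod_lt _ hpk)
    (mul_mem (transvection_mem_fixBasisOff hip hp _) hM) hi ?_ hmod
  rwa [hmod, Ne, EuclideanDomain.mod_eq_zero]

theorem fixBasisOff_le_elementarySubgroup (S : Finset n) :
    fixBasisOff S ≤ elementarySubgroup n R := by
  induction S using Finset.induction with
  | empty => simp [fixBasisOff_empty]
  | insert k S _ ih =>
    intro M hM
    obtain ⟨p, hp, hpk⟩ : ∃ p ∈ insert k S, M p k ≠ 0 := by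
      by_contra! hzero
      exact not_isUnit_zero (isUnit_of_forall_dvd_apply (Finset.mem_insert_self k S) hM
        fun i hi ↦ (hzero i hi).symm.dvd)
    exact mem_elementarySubgroup_of_mem_fixBasisOff_insert ih hM hp hpk

variable (n R) in
theorem elementarySubgroup_eq_top : elementarySubgroup n R = ⊤ :=
  top_le_iff.1 (fixBasisOff_univ (n := n) (R := R) ▸ fixBasisOff_le_elementarySubgroup _)

end EuclideanDomain
end ElementarySubgroup

section AdMatrix
open Matrix.SpecialLinearGroup (toGL)
variable (n : ℕ) (k c : ℤ)

lemma Ad_add : Ad (n + 2) (k + c) = Matrix.transvection 0 (Fin.last (n + 1)) c * Ad (n + 2) k := by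
  ext i j
  rcases eq_or_ne i 0 with rfl | hi
  · rw [transvection_mul_apply_same]
    simp only [Ad, of_apply, Fin.val_zero, Fin.val_last]
    grind
  · rw [transvection_mul_apply_of_ne _ _ _ _ hi]
    simp only [Ad, of_apply, Fin.val_eq_zero_iff, hi, if_false]

lemma Ad_zero_apply_castSucc (i : Fin (n + 2)) (j : Fin (n + 1)) :
    Ad (n + 2) 0 i j.castSucc = if i = j.succ then 1 else 0 := by
  have := j.isLt
  simp only [Ad, of_apply, Fin.ext_iff, Fin.val_castSucc, Fin.val_succ]
  grind

lemma Ad_zero_apply_zero (j : Fin (n + 2)) :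
    Ad (n + 2) 0 0 j = if j = Fin.last (n + 1) then -1 else 0 := by
  simp only [Ad, of_apply, Fin.ext_iff, Fin.val_last, Fin.val_zero]
  grind

lemma Ad_apply_castSucc_succ (i : Fin n) (j : Fin (n + 2)) :
    Ad (n + 2) k i.castSucc.succ j = if j = i.castSucc.castSucc then 1 else 0 := by
  have := i.isLt
  simp only [Ad, of_apply, Fin.ext_iff, Fin.val_castSucc, Fin.val_succ]
  grind

lemma Ad_zero_mul_single_castSucc (i : Fin (n + 1)) (j : Fin (n + 2)) :
    Ad (n + 2) 0 * single i.castSucc j c = single i.succ j c := by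
  ext a b
  rcases eq_or_ne b j with rfl | hb
  · simp [Ad_zero_apply_castSucc, single_apply, eq_comm]
  · simp [hb, hb.symm]

lemma single_zero_mul_Ad_zero (i : Fin (n + 2)) :
    single i 0 c * Ad (n + 2) 0 = single i (Fin.last (n + 1)) (-c) := by
  ext a b
  rcases eq_or_ne a i with rfl | ha
  · simp [Ad_zero_apply_zero, single_apply, eq_comm]
  · simp [ha, ha.symm]

lemma single_succ_castSucc_mul_Ad (i : Fin (n + 2)) (j : Fin n) :
    single i j.castSucc.succ c * Ad (n + 2) k = single i j.castSucc.castSucc c := by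
  ext a b
  rcases eq_or_ne a i with rfl | ha
  · rw [single_mul_apply_same, Ad_apply_castSucc_succ]
    simp [single_apply, eq_comm]
  · simp [ha, ha.symm]

lemma det_Ad_zero : (Ad (n + 2) 0).det = (-1) ^ n := by
  have hminor : (Ad (n + 2) 0).submatrix Fin.succ Fin.castSucc = 1 := by
    ext i j
    simp [Ad_zero_apply_castSucc, one_apply]
  rw [det_succ_row_zero, Finset.sum_eq_single (Fin.last (n + 1))]
  · rw [Fin.succAbove_last, hminor, Ad_zero_apply_zero]
    simp [pow_succ]
  · simp +contextual [Ad_zero_apply_zero]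
  · simp

lemma det_Ad : (Ad (n + 2) k).det = (-1) ^ n := by
  rw [← zero_add k, Ad_add, det_mul, det_transvection_of_ne _ _ Fin.last_pos.ne, one_mul,
    det_Ad_zero]

/-- The matrix `Ad (n + 2) k` as an element of `GL(n + 2, ℤ)`. -/
noncomputable def AdGL : GL (Fin (n + 2)) ℤ :=
  .mk'' (Ad (n + 2) k) (det_Ad n k ▸ isUnit_neg_one.pow n)

lemma AdGL_add : AdGL n (k + c) = toGL (transvection Fin.last_pos.ne c) * AdGL n k :=
  Units.ext (Ad_add n k c)

lemma semiconjBy_AdGL_zero_transvection_zero_last :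
    SemiconjBy (AdGL n 0) (toGL (transvection (Fin.last_pos (n := n)).ne c))
      (toGL (transvection one_ne_zero (-c))) := by
  refine Units.ext ?_
  change Ad (n + 2) 0 * Matrix.transvection 0 (Fin.last (n + 1)) c =
    Matrix.transvection 1 0 (-c) * Ad (n + 2) 0
  have hsingle : Ad (n + 2) 0 * single 0 (Fin.last (n + 1)) c = single 1 (Fin.last (n + 1)) c :=
    Ad_zero_mul_single_castSucc n c 0 (Fin.last (n + 1))
  rw [Matrix.transvection, Matrix.transvection, mul_add, add_mul, mul_one, one_mul, hsingle,
    single_zero_mul_Ad_zero, neg_neg]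

lemma semiconjBy_AdGL_zero_transvection_succ_castSucc (i : Fin n) :
    SemiconjBy (AdGL n 0) (toGL (transvection i.castSucc.castSucc_lt_succ.ne' c))
      (toGL (transvection i.succ.castSucc_lt_succ.ne' c)) := by
  refine Units.ext ?_
  change Ad (n + 2) 0 * Matrix.transvection i.castSucc.succ i.castSucc.castSucc c =
    Matrix.transvection i.succ.succ i.succ.castSucc c * Ad (n + 2) 0
  rw [Matrix.transvection, Matrix.transvection, mul_add, add_mul, mul_one, one_mul,
    ← Fin.succ_castSucc, single_succ_castSucc_mul_Ad, Fin.succ_castSucc,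
    Ad_zero_mul_single_castSucc]

variable {n k} {G : Subgroup (GL (Fin (n + 2)) ℤ)}

lemma toGL_transvection_zero_last_mem (hk : AdGL n k ∈ G) (hk' : AdGL n (k + 1) ∈ G) :
    toGL (transvection (Fin.last_pos (n := n)).ne c) ∈ G := by
  rw [AdGL_add, Subgroup.mul_mem_cancel_right _ hk] at hk'
  simpa [← map_zpow, transvection_zpow] using zpow_mem hk' c

lemma AdGL_zero_mem (hk : AdGL n k ∈ G) (hk' : AdGL n (k + 1) ∈ G) : AdGL n 0 ∈ G := by
  rw [← add_neg_cancel k, AdGL_add]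
  exact mul_mem (toGL_transvection_zero_last_mem _ hk hk') hk

lemma toGL_transvection_succ_castSucc_mem (hk : AdGL n k ∈ G) (hk' : AdGL n (k + 1) ∈ G)
    (i : Fin (n + 1)) : toGL (transvection i.castSucc_lt_succ.ne' c) ∈ G := by
  have hconj {x y} (hxy : SemiconjBy (AdGL n 0) x y) (hx : x ∈ G) : y ∈ G := by
    have h0 := AdGL_zero_mem hk hk'
    rw [← mul_inv_eq_iff_eq_mul.2 hxy]
    exact mul_mem (mul_mem h0 hx) (inv_mem h0)
  induction i using Fin.induction with
  | zero =>
    refine hconj ?_ (toGL_transvection_zero_last_mem (-c) hk hk')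
    simpa using semiconjBy_AdGL_zero_transvection_zero_last n (-c)
  | succ i ih => exact hconj (semiconjBy_AdGL_zero_transvection_succ_castSucc n c i) ih

lemma range_toGL_le_of_AdGL_mem (hk : AdGL n k ∈ G) (hk' : AdGL n (k + 1) ∈ G) :
    toGL.range ≤ G := by
  rw [MonoidHom.range_eq_map, Subgroup.map_le_iff_le_comap, ← elementarySubgroup_eq_top]
  refine elementarySubgroup_le_of_forall_add_one fun i ↦ ?_
  induction i using Fin.lastCases with
  | last =>
    rw [Fin.last_add_one]
    exact fun _ c ↦ toGL_transvection_zero_last_mem c hk hk'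
  | cast i =>
    rw [Fin.coeSucc_eq_succ]
    exact fun _ c ↦ toGL_transvection_succ_castSucc_mem c hk hk' i

end AdMatrix

theorem Ad_generate_SL_general (d : ℕ) (hd : 2 ≤ d) (k : ℤ) (M : Matrix (Fin d) (Fin d) ℤ)
    (hM : M.det = 1) :
    ∃ g ∈ Subgroup.closure {u : (Matrix (Fin d) (Fin d) ℤ)ˣ |
        (u : Matrix (Fin d) (Fin d) ℤ) = Ad d k ∨ (u : Matrix (Fin d) (Fin d) ℤ) = Ad d (k + 1)},
      (g : Matrix (Fin d) (Fin d) ℤ) = M := by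
  obtain ⟨n, rfl⟩ := Nat.exists_eq_add_of_le' hd
  exact ⟨_, range_toGL_le_of_AdGL_mem (Subgroup.subset_closure (.inl rfl))
    (Subgroup.subset_closure (.inr rfl)) ⟨⟨M, hM⟩, rfl⟩, rfl⟩

/-- For every `d ≥ 3`, the subgroup of `GL(d, ℤ)` generated by the matrices `A_d(k)`,
`k ≥ 1`, contains `SL(d, ℤ)`: every `d×d` integer matrix of determinant `1` is a finite
product of the matrices `A_d(k)` and their inverses. -/
theorem Ad_generate_SL (d : ℕ) (hd : 3 ≤ d) (M : Matrix (Fin d) (Fin d) ℤ)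
    (hM : M.det = 1) :
    ∃ g ∈ Subgroup.closure
        {u : (Matrix (Fin d) (Fin d) ℤ)ˣ | ∃ k : ℤ, 1 ≤ k ∧ (u : Matrix (Fin d) (Fin d) ℤ) = Ad d k},
      (g : Matrix (Fin d) (Fin d) ℤ) = M := by
  obtain ⟨g, hg, rfl⟩ := Ad_generate_SL_general d (by omega) 1 M hM
  refine ⟨g, Subgroup.closure_mono ?_ hg, rfl⟩
  rintro u (hu | hu)
  exacts [⟨1, le_rfl, hu⟩, ⟨2, one_le_two, hu⟩]
end
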